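/- arXiv:1012.0257 — 4 statements merged into one kernel-verified Lean document; each statement's English description precedes it below -/
import Mathlib

section
/- For every p = (x,y,z) ∈ ℝ³ with p ≠ 0, the squared length of the sub-gradient of the Folland–Kaplan gauge satisfies (X₁N)(p)² + (X₂N)(p)² = (x² + y²) / N(p)², where (X_iN)(p) = DN(p)(X_i(p)) is the derivative of N along X_i. -/
/-- Heisenberg vector field `X₁(x,y,z) = (1, 0, −y/2)`. -/
noncomputable def heisX1 : ℝ × ℝ × ℝ → ℝ × ℝ × ℝ := fun p => (1, 0, -p.2.1 / 2)

/-- Heisenberg vector field `X₂(x,y,z) = (0, 1, x/2)`. -/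
noncomputable def heisX2 : ℝ × ℝ × ℝ → ℝ × ℝ × ℝ := fun p => (0, 1, p.1 / 2)

/-- The Folland–Kaplan homogeneous gauge `N(x,y,z) = ((x²+y²)² + 16z²)^{1/4}`. -/
noncomputable def fkGauge : ℝ × ℝ × ℝ → ℝ :=
  fun p => ((p.1 ^ 2 + p.2.1 ^ 2) ^ 2 + 16 * p.2.2 ^ 2) ^ ((1 : ℝ) / 4)

/-!
Differentiating the polynomial `N⁴ = (x² + y²)² + 16z²` rather than its root gives
`N³ X₁N = (x² + y²)x - 4yz` and `N³ X₂N = (x² + y²)y + 4xz`. The mixed terms cancel in the sum of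
the squares, which is therefore `(x² + y²)((x² + y²)² + 16z²) = (x² + y²)N⁴`.
-/

theorem fkGauge_pow_four (p : ℝ × ℝ × ℝ) :
    fkGauge p ^ 4 = (p.1 ^ 2 + p.2.1 ^ 2) ^ 2 + 16 * p.2.2 ^ 2 := by
  rw [fkGauge, one_div]
  exact Real.rpow_inv_natCast_pow (by positivity) four_ne_zero

theorem fkGauge_eq_zero_iff {p : ℝ × ℝ × ℝ} : fkGauge p = 0 ↔ p = 0 := by
  rw [← pow_eq_zero_iff four_ne_zero, fkGauge_pow_four,
    add_eq_zero_iff_of_nonneg (by positivity) (by positivity), sq_eq_zero_iff,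
    add_eq_zero_iff_of_nonneg (sq_nonneg _) (sq_nonneg _)]
  simp [Prod.ext_iff, and_assoc]

theorem differentiableAt_fkGauge {p : ℝ × ℝ × ℝ} (hp : p ≠ 0) :
    DifferentiableAt ℝ fkGauge p := by
  have pow_four_ne_zero : (p.1 ^ 2 + p.2.1 ^ 2) ^ 2 + 16 * p.2.2 ^ 2 ≠ 0 := by
    rw [← fkGauge_pow_four]
    exact pow_ne_zero 4 (fkGauge_eq_zero_iff.not.mpr hp)
  exact DifferentiableAt.rpow_const (by fun_prop) (Or.inl pow_four_ne_zero)

theorem fderiv_fkGauge_pow_four_apply (p v : ℝ × ℝ × ℝ) :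
    fderiv ℝ (fun q => fkGauge q ^ 4) p v =
      4 * ((p.1 ^ 2 + p.2.1 ^ 2) * (p.1 * v.1 + p.2.1 * v.2.1) + 8 * p.2.2 * v.2.2) := by
  have hx : HasFDerivAt (fun q : ℝ × ℝ × ℝ => q.1) (.fst ℝ ℝ (ℝ × ℝ)) p := hasFDerivAt_fst
  have hyz : HasFDerivAt (fun q : ℝ × ℝ × ℝ => q.2) (.snd ℝ ℝ (ℝ × ℝ)) p := hasFDerivAt_snd
  have hpoly : HasFDerivAt
      (fun q : ℝ × ℝ × ℝ => (q.1 ^ 2 + q.2.1 ^ 2) ^ 2 + 16 * q.2.2 ^ 2) _ p :=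
    (((hx.pow 2).add (hyz.fst.pow 2)).pow 2).add ((hyz.snd.pow 2).const_mul 16)
  simp_rw [fkGauge_pow_four]
  rw [hpoly.fderiv]
  simp only [Pi.add_apply, Nat.add_one_sub_one, pow_one, smul_add, nsmul_eq_mul, Nat.cast_ofNat,
    add_apply, smul_apply, ContinuousLinearMap.coe_fst', smul_eq_mul,
    ContinuousLinearMap.comp_apply, ContinuousLinearMap.coe_snd']
  ring

theorem fkGauge_pow_three_mul_fderiv_apply {p : ℝ × ℝ × ℝ} (hp : p ≠ 0) (v : ℝ × ℝ × ℝ) :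
    fkGauge p ^ 3 * fderiv ℝ fkGauge p v =
      (p.1 ^ 2 + p.2.1 ^ 2) * (p.1 * v.1 + p.2.1 * v.2.1) + 8 * p.2.2 * v.2.2 := by
  have chain_rule : fderiv ℝ (fun q => fkGauge q ^ 4) p v =
      4 * (fkGauge p ^ 3 * fderiv ℝ fkGauge p v) := by
    rw [fderiv_fun_pow 4 (differentiableAt_fkGauge hp)]
    simp [mul_assoc]
  rw [fderiv_fkGauge_pow_four_apply] at chain_rule
  exact (mul_left_cancel₀ four_ne_zero chain_rule).symm

theorem fkGauge_pow_three_mul_fderiv_heisX1 {p : ℝ × ℝ × ℝ} (hp : p ≠ 0) :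
    fkGauge p ^ 3 * fderiv ℝ fkGauge p (heisX1 p) =
      (p.1 ^ 2 + p.2.1 ^ 2) * p.1 - 4 * p.2.1 * p.2.2 := by
  rw [fkGauge_pow_three_mul_fderiv_apply hp, heisX1]
  ring

theorem fkGauge_pow_three_mul_fderiv_heisX2 {p : ℝ × ℝ × ℝ} (hp : p ≠ 0) :
    fkGauge p ^ 3 * fderiv ℝ fkGauge p (heisX2 p) =
      (p.1 ^ 2 + p.2.1 ^ 2) * p.2.1 + 4 * p.1 * p.2.2 := by
  rw [fkGauge_pow_three_mul_fderiv_apply hp, heisX2]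
  ring

theorem subgradient_of_gauge (p : ℝ × ℝ × ℝ) (hp : p ≠ 0) :
    (fderiv ℝ fkGauge p (heisX1 p)) ^ 2 + (fderiv ℝ fkGauge p (heisX2 p)) ^ 2
      = (p.1 ^ 2 + p.2.1 ^ 2) / (fkGauge p) ^ 2 := by
  have hN : fkGauge p ≠ 0 := fkGauge_eq_zero_iff.not.mpr hp
  rw [eq_div_iff (pow_ne_zero 2 hN)]
  refine mul_left_cancel₀ (pow_ne_zero 4 hN) ?_
  calc fkGauge p ^ 4 * (((fderiv ℝ fkGauge p (heisX1 p)) ^ 2 +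
          (fderiv ℝ fkGauge p (heisX2 p)) ^ 2) * fkGauge p ^ 2)
      = (fkGauge p ^ 3 * fderiv ℝ fkGauge p (heisX1 p)) ^ 2 +
          (fkGauge p ^ 3 * fderiv ℝ fkGauge p (heisX2 p)) ^ 2 := by ring
    _ = ((p.1 ^ 2 + p.2.1 ^ 2) * p.1 - 4 * p.2.1 * p.2.2) ^ 2 +
          ((p.1 ^ 2 + p.2.1 ^ 2) * p.2.1 + 4 * p.1 * p.2.2) ^ 2 := by
        rw [fkGauge_pow_three_mul_fderiv_heisX1 hp, fkGauge_pow_three_mul_fderiv_heisX2 hp]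
    _ = ((p.1 ^ 2 + p.2.1 ^ 2) ^ 2 + 16 * p.2.2 ^ 2) * (p.1 ^ 2 + p.2.1 ^ 2) := by ring
    _ = fkGauge p ^ 4 * (p.1 ^ 2 + p.2.1 ^ 2) := by rw [fkGauge_pow_four]
end

section
/- For every p = (x,y,z) ∈ ℝ³ with p ≠ 0, the sub-Laplacian of the Folland–Kaplan gauge satisfies (X₁(X₁N))(p) + (X₂(X₂N))(p) = 3(x² + y²) / N(p)³, where for a vector field V and smooth function f, (Vf)(q) = Df(q)(V(q)), and V(Vf) is obtained by applying V again to the function q ↦ (Vf)(q). -/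
/-- Derivative of a function `f : ℝ³ → ℝ` along a vector field `V`:
`(Vf)(q) = Df(q)(V(q))`. -/
noncomputable def vderiv3 (V : ℝ × ℝ × ℝ → ℝ × ℝ × ℝ) (f : ℝ × ℝ × ℝ → ℝ) :
    ℝ × ℝ × ℝ → ℝ :=
  fun q => fderiv ℝ f q (V q)

/-!
Write `G = N⁴ = (x² + y²)² + 16z²` and `r = x² + y²`. The polynomial `G` satisfies two horizontal
identities, `X₁²G + X₂²G = 24r` and `(X₁G)² + (X₂G)² = 16rG`. In the chain rule for
`G ^ s`, the factor `G` of the second identity raises `G ^ (s - 2)` to `G ^ (s - 1)`, so both terms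
are multiples of `r G ^ (s - 1)`; the gauge is the case `s = 1 / 4`.
-/

open Filter Topology

section RealPower

variable {E : Type*} [NormedAddCommGroup E] [NormedSpace ℝ E] {f : E → ℝ} {p : E}

theorem fderiv_rpow_const_apply (hf : DifferentiableAt ℝ f p) (hp : f p ≠ 0) (s : ℝ) (v : E) :
    fderiv ℝ (fun q => f q ^ s) p v = s * f p ^ (s - 1) * fderiv ℝ f p v := by
  simp [(hf.hasFDerivAt.rpow_const (Or.inl hp)).fderiv]

theorem fderiv_fderiv_rpow_const_apply {V : E → E} (hf : ∀ᶠ q in 𝓝 p, DifferentiableAt ℝ f q)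
    (hVf : DifferentiableAt ℝ (fun q => fderiv ℝ f q (V q)) p) (hp : f p ≠ 0) (s : ℝ) :
    fderiv ℝ (fun q => fderiv ℝ (fun x => f x ^ s) q (V q)) p (V p) =
      s * f p ^ (s - 1) * fderiv ℝ (fun q => fderiv ℝ f q (V q)) p (V p) +
        s * (s - 1) * f p ^ (s - 2) * fderiv ℝ f p (V p) ^ 2 := by
  have hfp : DifferentiableAt ℝ f p := hf.self_of_nhds
  have first_deriv : (fun q => fderiv ℝ (fun x => f x ^ s) q (V q)) =ᶠ[𝓝 p]
      fun q => s * (f q ^ (s - 1) * fderiv ℝ f q (V q)) := by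
    filter_upwards [hf, hfp.continuousAt.eventually_ne hp] with q hfq hq
    rw [fderiv_rpow_const_apply hfq hq, mul_assoc]
  have hpow : DifferentiableAt ℝ (fun q => f q ^ (s - 1)) p := hfp.rpow_const (Or.inl hp)
  rw [first_deriv.fderiv_eq, fderiv_const_mul (hpow.fun_mul hVf), fderiv_fun_mul hpow hVf]
  simp only [smul_apply, add_apply, smul_eq_mul, fderiv_rpow_const_apply hfp hp]
  rw [show s - 1 - 1 = s - 2 by ring]
  ring

end RealPower

/-- The quartic polynomial `N⁴` underlying the Folland–Kaplan gauge `N`; unlike `N` it is smooth on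
the whole space. -/
def fkQuartic : ℝ × ℝ × ℝ → ℝ :=
  fun p => (p.1 ^ 2 + p.2.1 ^ 2) ^ 2 + 16 * p.2.2 ^ 2

theorem fkQuartic_nonneg (p : ℝ × ℝ × ℝ) : 0 ≤ fkQuartic p := by
  unfold fkQuartic
  positivity

theorem fkQuartic_pos {p : ℝ × ℝ × ℝ} (hp : p ≠ 0) : 0 < fkQuartic p := by
  obtain ⟨x, y, z⟩ := p
  refine (fkQuartic_nonneg _).lt_of_ne' fun h => hp ?_
  obtain ⟨hxy, hz⟩ : x ^ 2 + y ^ 2 = 0 ∧ z = 0 := by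
    simpa [fkQuartic, add_eq_zero_iff_of_nonneg, sq_nonneg] using h
  obtain ⟨hx, hy⟩ : x = 0 ∧ y = 0 := by
    simpa [add_eq_zero_iff_of_nonneg, sq_nonneg] using hxy
  simp [hx, hy, hz]

theorem differentiable_fkQuartic : Differentiable ℝ fkQuartic := by
  unfold fkQuartic
  fun_prop

theorem fkGauge_rpow (a : ℝ) (p : ℝ × ℝ × ℝ) : fkGauge p ^ a = fkQuartic p ^ (a / 4) := by
  rw [show fkGauge p = fkQuartic p ^ ((1 : ℝ) / 4) from rfl, ← Real.rpow_mul (fkQuartic_nonneg p),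
    one_div_mul_eq_div]

theorem fderiv_fkQuartic_apply (p v : ℝ × ℝ × ℝ) :
    fderiv ℝ fkQuartic p v =
      4 * (p.1 ^ 2 + p.2.1 ^ 2) * (p.1 * v.1 + p.2.1 * v.2.1) + 32 * p.2.2 * v.2.2 := by
  unfold fkQuartic
  simp (disch := fun_prop) [fderiv_fun_add, fderiv_fun_pow, fderiv_const_mul, fderiv.fst,
    fderiv.snd]
  ring

theorem vderiv3_heisX1_fkQuartic :
    vderiv3 heisX1 fkQuartic =
      fun p => 4 * (p.1 ^ 2 + p.2.1 ^ 2) * p.1 - 16 * p.2.1 * p.2.2 := by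
  funext p
  simp only [vderiv3, heisX1, fderiv_fkQuartic_apply]
  ring

theorem vderiv3_heisX2_fkQuartic :
    vderiv3 heisX2 fkQuartic =
      fun p => 4 * (p.1 ^ 2 + p.2.1 ^ 2) * p.2.1 + 16 * p.1 * p.2.2 := by
  funext p
  simp only [vderiv3, heisX2, fderiv_fkQuartic_apply]
  ring

theorem vderiv3_heisX1_heisX1_fkQuartic (p : ℝ × ℝ × ℝ) :
    vderiv3 heisX1 (vderiv3 heisX1 fkQuartic) p = 12 * (p.1 ^ 2 + p.2.1 ^ 2) := by
  rw [vderiv3_heisX1_fkQuartic]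
  simp (disch := fun_prop) [vderiv3, heisX1, fderiv_fun_add, fderiv_fun_sub, fderiv_fun_pow,
    fderiv_fun_mul, fderiv.fst, fderiv.snd]
  ring

theorem vderiv3_heisX2_heisX2_fkQuartic (p : ℝ × ℝ × ℝ) :
    vderiv3 heisX2 (vderiv3 heisX2 fkQuartic) p = 12 * (p.1 ^ 2 + p.2.1 ^ 2) := by
  rw [vderiv3_heisX2_fkQuartic]
  simp (disch := fun_prop) [vderiv3, heisX2, fderiv_fun_add, fderiv_fun_pow,
    fderiv_fun_mul, fderiv.fst, fderiv.snd]
  ring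

theorem vderiv3_heisX1_sq_add_vderiv3_heisX2_sq_fkQuartic (p : ℝ × ℝ × ℝ) :
    vderiv3 heisX1 fkQuartic p ^ 2 + vderiv3 heisX2 fkQuartic p ^ 2 =
      16 * (p.1 ^ 2 + p.2.1 ^ 2) * fkQuartic p := by
  simp only [vderiv3_heisX1_fkQuartic, vderiv3_heisX2_fkQuartic, fkQuartic]
  ring

theorem sublaplacian_fkQuartic_rpow (s : ℝ) {p : ℝ × ℝ × ℝ} (hp : p ≠ 0) :
    vderiv3 heisX1 (vderiv3 heisX1 fun q => fkQuartic q ^ s) p +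
        vderiv3 heisX2 (vderiv3 heisX2 fun q => fkQuartic q ^ s) p =
      8 * s * (2 * s + 1) * (p.1 ^ 2 + p.2.1 ^ 2) * fkQuartic p ^ (s - 1) := by
  have hG : fkQuartic p ≠ 0 := (fkQuartic_pos hp).ne'
  have chain_rule (V : ℝ × ℝ × ℝ → ℝ × ℝ × ℝ) (hV : Differentiable ℝ (vderiv3 V fkQuartic)) :
      vderiv3 V (vderiv3 V fun q => fkQuartic q ^ s) p =
        s * fkQuartic p ^ (s - 1) * vderiv3 V (vderiv3 V fkQuartic) p +
          s * (s - 1) * fkQuartic p ^ (s - 2) * vderiv3 V fkQuartic p ^ 2 :=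
    fderiv_fderiv_rpow_const_apply (.of_forall differentiable_fkQuartic) (hV p) hG s
  have hpow : fkQuartic p ^ (s - 2) * fkQuartic p = fkQuartic p ^ (s - 1) := by
    rw [← Real.rpow_add_one hG]
    congr 1
    ring
  rw [chain_rule heisX1 (by rw [vderiv3_heisX1_fkQuartic]; fun_prop),
    chain_rule heisX2 (by rw [vderiv3_heisX2_fkQuartic]; fun_prop),
    vderiv3_heisX1_heisX1_fkQuartic, vderiv3_heisX2_heisX2_fkQuartic]
  linear_combination
    s * (s - 1) * fkQuartic p ^ (s - 2) * vderiv3_heisX1_sq_add_vderiv3_heisX2_sq_fkQuartic p +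
      16 * s * (s - 1) * (p.1 ^ 2 + p.2.1 ^ 2) * hpow

-- The coefficient vanishes at `a = -2`, the exponent of Folland's fundamental solution.
theorem sublaplacian_of_gauge_general (a : ℝ) (p : ℝ × ℝ × ℝ) (hp : p ≠ 0) :
    vderiv3 heisX1 (vderiv3 heisX1 fun q => fkGauge q ^ a) p +
        vderiv3 heisX2 (vderiv3 heisX2 fun q => fkGauge q ^ a) p =
      a * (a + 2) * (p.1 ^ 2 + p.2.1 ^ 2) * fkGauge p ^ (a - 4) := by
  simp only [fkGauge_rpow]
  rw [sublaplacian_fkQuartic_rpow _ hp, show (a - 4) / 4 = a / 4 - 1 by ring]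
  ring

theorem sublaplacian_of_gauge (p : ℝ × ℝ × ℝ) (hp : p ≠ 0) :
    vderiv3 heisX1 (vderiv3 heisX1 fkGauge) p + vderiv3 heisX2 (vderiv3 heisX2 fkGauge) p
      = 3 * (p.1 ^ 2 + p.2.1 ^ 2) / (fkGauge p) ^ 3 := by
  convert sublaplacian_of_gauge_general 1 p hp using 1 <;>
    norm_num [div_eq_mul_inv, Real.rpow_neg_ofNat]
end

section
/- Suppose the commutator coefficients are smooth functions rather than constants: [Z_k, X_j](x) = ∑_{l=1}^n c_{kjl}(x) Z_l(x) with each c_{kjl} : ℝᴺ → ℝ smooth. Then for every β > 0 there exists a continuous function κ : ℝᴺ → ℝ such that for every smooth f : ℝᴺ → ℝ and every x ∈ ℝᴺ, 2Γ(f, Lf)(x) − L(Γ(f))(x) ≤ −κ(x) Γ(f)(x). Moreover, if in addition all functions c_{kjl} and their horizontal derivatives X_j c_{kjl} are bounded on ℝᴺ, then there exists b̂₀ ∈ (0,∞) such that for every β > b̂₀ the function κ can be taken bounded below by a strictly positive constant. -/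
open scoped BigOperators

/-- Derivative of `f` along the vector field `V`: `(Vf)(p) = Df(p)(V(p))`. -/
noncomputable def vderiv {N : ℕ}
    (V : EuclideanSpace ℝ (Fin N) → EuclideanSpace ℝ (Fin N))
    (f : EuclideanSpace ℝ (Fin N) → ℝ) : EuclideanSpace ℝ (Fin N) → ℝ :=
  fun p => fderiv ℝ f p (V p)

/-- Lie bracket of vector fields: `[V,W](p) = (DW)(p)(V(p)) − (DV)(p)(W(p))`. -/
noncomputable def lieVF {N : ℕ}
    (V W : EuclideanSpace ℝ (Fin N) → EuclideanSpace ℝ (Fin N)) :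
    EuclideanSpace ℝ (Fin N) → EuclideanSpace ℝ (Fin N) :=
  fun p => fderiv ℝ W p (V p) - fderiv ℝ V p (W p)

/-- The complete gradient form `Γ(f) = ∑_k (Z_k f)²`. -/
noncomputable def cGamma {N n : ℕ}
    (Z : Fin n → (EuclideanSpace ℝ (Fin N) → EuclideanSpace ℝ (Fin N)))
    (f : EuclideanSpace ℝ (Fin N) → ℝ) : EuclideanSpace ℝ (Fin N) → ℝ :=
  fun x => ∑ k, (vderiv (Z k) f x) ^ 2

/-- The bilinear form `Γ(f,g) = ∑_k (Z_k f)(Z_k g)`. -/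
noncomputable def cGamma2 {N n : ℕ}
    (Z : Fin n → (EuclideanSpace ℝ (Fin N) → EuclideanSpace ℝ (Fin N)))
    (f g : EuclideanSpace ℝ (Fin N) → ℝ) : EuclideanSpace ℝ (Fin N) → ℝ :=
  fun x => ∑ k, vderiv (Z k) f x * vderiv (Z k) g x

/-- The operator `Lf = ∑ᵢ Xᵢ(Xᵢf) − βDf + ∑ᵢⱼ Gᵢⱼ Xᵢ(Xⱼf) + ∑ᵢ αᵢ Xᵢf`. -/
noncomputable def opL {N m : ℕ}
    (X : Fin m → (EuclideanSpace ℝ (Fin N) → EuclideanSpace ℝ (Fin N)))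
    (D : EuclideanSpace ℝ (Fin N) → EuclideanSpace ℝ (Fin N))
    (G : Matrix (Fin m) (Fin m) ℝ)
    (α : Fin m → EuclideanSpace ℝ (Fin N) → ℝ) (β : ℝ)
    (f : EuclideanSpace ℝ (Fin N) → ℝ) : EuclideanSpace ℝ (Fin N) → ℝ :=
  fun x => ∑ i, vderiv (X i) (vderiv (X i) f) x - β * vderiv D f x
    + ∑ i, ∑ j, G i j * vderiv (X i) (vderiv (X j) f) x
    + ∑ i, α i x * vderiv (X i) f x

/-!
Write `A = 1 + G`, so that `L = ∑ A i j Xᵢ Xⱼ − β D + ∑ αᵢ Xᵢ`. The carré du champ identity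
`L(u²) = 2 u L u + 2 ∑ A i j (Xᵢ u) (Xⱼ u)` turns `2 Γ(f, L f) − L(Γ f)` into
`∑ₖ 2 (Zₖ f) [Zₖ, L] f − 2 ∑ₖ ∑ A i j (Xᵢ Zₖ f) (Xⱼ Zₖ f)`, and the last sum is at least
`δ ∑ₖᵢ (Xᵢ Zₖ f)²` by ellipticity. Expanding with the commutator relations,
`[Zₖ, L] f = ∑ Bₖᵢₗ Xᵢ Zₗ f + ∑ Eₖₗ Zₗ f − β λₖ Zₖ f`, where `B` and `E` are polynomials in
`c`, `X c`, `α`, `Z α`. Young's inequality absorbs the `B` term into the elliptic one and bounds the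
`E` term by a multiple of `Γ f`, while `[Zₖ, D] = λₖ Zₖ` contributes `−2 β ∑ₖ λₖ (Zₖ f)²`.
Bounded coefficients give a bounded multiple, which a large `β` beats.
-/

open Bornology Filter Set Topology

section VectorFieldDerivative

variable {N : ℕ} {V W : EuclideanSpace ℝ (Fin N) → EuclideanSpace ℝ (Fin N)}
  {f g : EuclideanSpace ℝ (Fin N) → ℝ} {x : EuclideanSpace ℝ (Fin N)}

theorem contDiff_vderiv {r s : WithTop ℕ∞} (hV : ContDiff ℝ r V) (hf : ContDiff ℝ s f)
    (hrs : r + 1 ≤ s) : ContDiff ℝ r (vderiv V f) :=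
  (hf.fderiv_right hrs).clm_apply hV

theorem vderiv_fun_add (hf : DifferentiableAt ℝ f x) (hg : DifferentiableAt ℝ g x) :
    vderiv V (fun p => f p + g p) x = vderiv V f x + vderiv V g x := by
  simp only [vderiv, fderiv_fun_add hf hg, add_apply]

theorem vderiv_fun_mul (hf : DifferentiableAt ℝ f x) (hg : DifferentiableAt ℝ g x) :
    vderiv V (fun p => f p * g p) x = vderiv V f x * g x + f x * vderiv V g x := by
  simp only [vderiv, fderiv_fun_mul hf hg, add_apply, smul_apply, smul_eq_mul]
  ring

theorem vderiv_const_mul (a : ℝ) (hf : DifferentiableAt ℝ f x) :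
    vderiv V (fun p => a * f p) x = a * vderiv V f x := by
  simp only [vderiv, fderiv_const_mul hf, smul_apply, smul_eq_mul]

theorem vderiv_fun_sum {ι : Type*} {s : Finset ι} {u : ι → EuclideanSpace ℝ (Fin N) → ℝ}
    (hu : ∀ i ∈ s, DifferentiableAt ℝ (u i) x) :
    vderiv V (fun p => ∑ i ∈ s, u i p) x = ∑ i ∈ s, vderiv V (u i) x := by
  simp only [vderiv, fderiv_fun_sum hu, sum_apply]

theorem vderiv_vderiv_eq_fderiv_fderiv (hW : DifferentiableAt ℝ W x) (hf : ContDiff ℝ 2 f) :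
    vderiv V (vderiv W f) x
      = fderiv ℝ (fderiv ℝ f) x (V x) (W x) + fderiv ℝ f x (fderiv ℝ W x (V x)) := by
  have hdf : DifferentiableAt ℝ (fderiv ℝ f) x :=
    (hf.fderiv_right (m := 1) (by norm_num)).differentiable one_ne_zero x
  unfold vderiv
  rw [fderiv_clm_apply hdf hW]
  simp [add_comm]

theorem vderiv_vderiv_comm (hV : DifferentiableAt ℝ V x) (hW : DifferentiableAt ℝ W x)
    (hf : ContDiff ℝ 2 f) :
    vderiv V (vderiv W f) x = vderiv W (vderiv V f) x + vderiv (lieVF V W) f x := by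
  have hsymm : IsSymmSndFDerivAt ℝ f x := hf.contDiffAt.isSymmSndFDerivAt (by simp)
  rw [vderiv_vderiv_eq_fderiv_fderiv hW hf, vderiv_vderiv_eq_fderiv_fderiv hV hf, hsymm.eq]
  simp only [vderiv, lieVF, map_sub]
  ring

end VectorFieldDerivative

section Generator

variable {N m n : ℕ} {X : Fin m → EuclideanSpace ℝ (Fin N) → EuclideanSpace ℝ (Fin N)}
  {D V : EuclideanSpace ℝ (Fin N) → EuclideanSpace ℝ (Fin N)}
  {G : Matrix (Fin m) (Fin m) ℝ} {α : Fin m → EuclideanSpace ℝ (Fin N) → ℝ} {β : ℝ}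
  {f : EuclideanSpace ℝ (Fin N) → ℝ} {x : EuclideanSpace ℝ (Fin N)}

theorem opL_eq_one_add :
    opL X D G α β f = fun x =>
      ∑ i, ∑ j, (1 + G) i j * vderiv (X i) (vderiv (X j) f) x + -β * vderiv D f x
        + ∑ i, α i x * vderiv (X i) f x := by
  funext x
  simp only [opL, Matrix.add_apply, Matrix.one_apply, add_mul, ite_mul, one_mul, zero_mul,
    Finset.sum_add_distrib, Finset.sum_ite_eq, Finset.mem_univ, if_true]
  ring

theorem vderiv_opL (hX : ∀ i, ContDiff ℝ 2 (X i)) (hD : DifferentiableAt ℝ D x)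
    (hα : ∀ i, DifferentiableAt ℝ (α i) x) (hf : ContDiff ℝ 3 f) :
    vderiv V (opL X D G α β f) x
      = ∑ i, ∑ j, (1 + G) i j * vderiv V (vderiv (X i) (vderiv (X j) f)) x
        + -β * vderiv V (vderiv D f) x
        + ∑ i, (vderiv V (α i) x * vderiv (X i) f x + α i x * vderiv V (vderiv (X i) f) x) := by
  have hXf (i) : ContDiff ℝ 2 (vderiv (X i) f) := contDiff_vderiv (hX i) hf (by norm_num)
  have hXf' (i) : DifferentiableAt ℝ (vderiv (X i) f) x := (hXf i).differentiable two_ne_zero x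
  have hXXf (i j) : DifferentiableAt ℝ (vderiv (X i) (vderiv (X j) f)) x :=
    (contDiff_vderiv ((hX i).of_le one_le_two) (hXf j) (by norm_num)).differentiable one_ne_zero x
  have hDf : DifferentiableAt ℝ (vderiv D f) x :=
    ((hf.fderiv_right (m := 2) (by norm_num)).differentiable two_ne_zero x).clm_apply hD
  rw [opL_eq_one_add, vderiv_fun_add (by fun_prop) (by fun_prop),
    vderiv_fun_add (by fun_prop) (by fun_prop), vderiv_const_mul _ hDf,
    vderiv_fun_sum (by fun_prop), vderiv_fun_sum (by fun_prop)]
  congr! 4 with i _ i _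
  · rw [vderiv_fun_sum (by fun_prop)]
    exact Finset.sum_congr rfl fun j _ => vderiv_const_mul _ (hXXf i j)
  · exact vderiv_fun_mul (hα i) (hXf' i)

theorem opL_fun_sum {ι : Type*} {s : Finset ι} {u : ι → EuclideanSpace ℝ (Fin N) → ℝ}
    (hX : ∀ i, ContDiff ℝ 1 (X i)) (hu : ∀ k, ContDiff ℝ 2 (u k)) :
    opL X D G α β (fun p => ∑ k ∈ s, u k p) x = ∑ k ∈ s, opL X D G α β (u k) x := by
  have hu' (k p) : DifferentiableAt ℝ (u k) p := (hu k).differentiable two_ne_zero p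
  have hXu (i k) : DifferentiableAt ℝ (vderiv (X i) (u k)) x :=
    (contDiff_vderiv (hX i) (hu k) (by norm_num)).differentiable one_ne_zero x
  have hderiv (V) : vderiv V (fun p => ∑ k ∈ s, u k p) = fun p => ∑ k ∈ s, vderiv V (u k) p :=
    funext fun p => vderiv_fun_sum fun k _ => hu' k p
  have hderiv₂ (i j) : vderiv (X i) (fun p => ∑ k ∈ s, vderiv (X j) (u k) p) x
      = ∑ k ∈ s, vderiv (X i) (vderiv (X j) (u k)) x :=
    vderiv_fun_sum fun k _ => hXu j k
  simp only [opL, hderiv, hderiv₂, Finset.sum_add_distrib, Finset.sum_sub_distrib,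
    Finset.mul_sum, Finset.sum_comm (s := s)]

theorem opL_sq {u : EuclideanSpace ℝ (Fin N) → ℝ} (hX : ∀ i, ContDiff ℝ 1 (X i))
    (hu : ContDiff ℝ 2 u) :
    opL X D G α β (fun p => u p ^ 2) x
      = 2 * u x * opL X D G α β u x
        + 2 * ∑ i, ∑ j, (1 + G) i j * (vderiv (X i) u x * vderiv (X j) u x) := by
  have hu' (p) : DifferentiableAt ℝ u p := hu.differentiable two_ne_zero p
  have hXu (i) : DifferentiableAt ℝ (vderiv (X i) u) x :=
    (contDiff_vderiv (hX i) hu (by norm_num)).differentiable one_ne_zero x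
  have hderiv (V) : vderiv V (fun p => u p ^ 2) = fun p => 2 * (u p * vderiv V u p) := by
    funext p
    simp only [sq, vderiv_fun_mul (hu' p) (hu' p)]
    ring
  have hderiv₂ (i j) : vderiv (X i) (fun p => 2 * (u p * vderiv (X j) u p)) x
      = 2 * (vderiv (X i) u x * vderiv (X j) u x)
        + 2 * u x * vderiv (X i) (vderiv (X j) u) x := by
    rw [vderiv_const_mul _ (by fun_prop), vderiv_fun_mul (hu' x) (hXu j)]
    ring
  have hpull (a v : ℝ) : a * (2 * (u x * v)) = 2 * u x * (a * v) := by ring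
  have hpull₂ (a v w : ℝ) : a * (2 * v + 2 * u x * w) = 2 * (a * v) + 2 * u x * (a * w) := by ring
  simp only [opL_eq_one_add, hderiv, hderiv₂, hpull, hpull₂, Finset.sum_add_distrib,
    ← Finset.mul_sum]
  ring

theorem two_mul_cGamma2_opL_sub_opL_cGamma
    {Z : Fin n → EuclideanSpace ℝ (Fin N) → EuclideanSpace ℝ (Fin N)}
    (hX : ∀ i, ContDiff ℝ 1 (X i)) (hZ : ∀ k, ContDiff ℝ 2 (Z k)) (hf : ContDiff ℝ 3 f) :
    2 * cGamma2 Z f (opL X D G α β f) x - opL X D G α β (cGamma Z f) x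
      = ∑ k, (2 * vderiv (Z k) f x
          * (vderiv (Z k) (opL X D G α β f) x - opL X D G α β (vderiv (Z k) f) x)
        - 2 * ∑ i, ∑ j, (1 + G) i j
          * (vderiv (X i) (vderiv (Z k) f) x * vderiv (X j) (vderiv (Z k) f) x)) := by
  have hZf (k) : ContDiff ℝ 2 (vderiv (Z k) f) := contDiff_vderiv (hZ k) hf (by norm_num)
  unfold cGamma
  rw [opL_fun_sum hX fun k => (hZf k).pow 2, cGamma2, Finset.mul_sum, ← Finset.sum_sub_distrib]
  refine Finset.sum_congr rfl fun k _ => ?_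
  rw [opL_sq hX (hZf k)]
  ring

end Generator

section Coefficients

variable {ι κ : Type*}

/-- The values at one point of the structure functions and their first derivatives: a quadruple
`(c, Xc, α, Zα)` with entries `c k j l`, `Xᵢ (c k j l)` (indexed by `i k j l`), `α i` and
`Zₖ (α i)` (indexed by `k i`). Horizontal fields are indexed by `ι`, the complete family by `κ`. -/
abbrev CoeffJet (ι κ : Type*) : Type _ :=
  (κ → ι → κ → ℝ) × (ι → κ → ι → κ → ℝ) × (ι → ℝ) × (κ → ι → ℝ)

/-- The coefficient `B k (i, l)` of `Xᵢ Zₗ` in the commutator of `Zₖ` with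
`∑ A i j Xᵢ Xⱼ + ∑ αᵢ Xᵢ`. -/
def mixedCoeff [Fintype ι] (A : Matrix ι ι ℝ) (q : CoeffJet ι κ) (k : κ) (p : ι × κ) : ℝ :=
  ∑ j, (A p.1 j + A j p.1) * q.1 k j p.2

/-- The coefficient `E k l` of `Zₗ` in the commutator of `Zₖ` with `∑ A i j Xᵢ Xⱼ + ∑ αᵢ Xᵢ`,
where `Xᵢ = Z (e i)`. -/
def gradientCoeff [Fintype ι] [Fintype κ] [DecidableEq κ] (e : ι → κ) (A : Matrix ι ι ℝ)
    (q : CoeffJet ι κ) (k l : κ) : ℝ :=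
  ∑ i, ∑ j, A i j * (∑ p, q.1 k i p * q.1 p j l + q.2.1 i k j l)
    + ∑ i, q.2.2.1 i * q.1 k i l + ∑ i with e i = l, q.2.2.2 k i

/-- The multiple of `Γ(f)` that bounds the commutator terms of `2 Γ(f, L f) − L(Γ f)`, apart from
the contribution of the drift `D`, once the ellipticity constant `δ` has absorbed the derivatives
`Xᵢ Zₗ f`. -/
noncomputable def commutatorBound [Fintype ι] [Fintype κ] [DecidableEq κ] (δ : ℝ) (e : ι → κ)
    (A : Matrix ι ι ℝ) (q : CoeffJet ι κ) : ℝ :=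
  (2 * δ)⁻¹ * ∑ k, ∑ p, mixedCoeff A q k p ^ 2 + (∑ k, ∑ l, gradientCoeff e A q k l ^ 2 + 1)

variable [Fintype ι] [Fintype κ]

theorem two_mul_sum_mul_sum_mul_le (T : ι → κ → ℝ) (u : ι → ℝ) (v : κ → ℝ) {ε : ℝ} (hε : 0 < ε) :
    2 * ∑ i, u i * ∑ j, T i j * v j
      ≤ ε⁻¹ * (∑ i, ∑ j, T i j ^ 2) * ∑ i, u i ^ 2 + ε * ∑ j, v j ^ 2 := by
  calc 2 * ∑ i, u i * ∑ j, T i j * v j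
      = ∑ j, 2 * v j * ∑ i, T i j * u i := by
        simp only [Finset.mul_sum]
        rw [Finset.sum_comm]
        exact Finset.sum_congr rfl fun j _ => Finset.sum_congr rfl fun i _ => by ring
    _ ≤ ∑ j, (ε * v j ^ 2 + ε⁻¹ * ((∑ i, T i j ^ 2) * ∑ i, u i ^ 2)) := by
        gcongr with j
        refine (two_mul_le_add_mul_sq hε).trans ?_
        gcongr
        exact Finset.sum_mul_sq_le_sq_mul_sq _ _ _
    _ = ε⁻¹ * (∑ i, ∑ j, T i j ^ 2) * ∑ i, u i ^ 2 + ε * ∑ j, v j ^ 2 := by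
        rw [Finset.sum_add_distrib, ← Finset.mul_sum, ← Finset.mul_sum, ← Finset.sum_mul,
          Finset.sum_comm (f := fun j i => T i j ^ 2)]
        ring

theorem sum_symmetrization_add_one_mul [DecidableEq ι] (G : Matrix ι ι ℝ) (v : ι → ℝ) :
    ∑ i, ∑ j, ((G i j + G j i) / 2 + (if i = j then 1 else 0)) * v i * v j
      = ∑ i, ∑ j, (1 + G) i j * (v i * v j) := by
  have htranspose : ∑ i, ∑ j, G j i * (v i * v j) = ∑ i, ∑ j, G i j * (v i * v j) := by
    rw [Finset.sum_comm]
    exact Finset.sum_congr rfl fun i _ => Finset.sum_congr rfl fun j _ => by ring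
  have hsplit (i j) : ((G i j + G j i) / 2 + (if i = j then 1 else 0)) * v i * v j
      = (1 : Matrix ι ι ℝ) i j * (v i * v j)
        + 2⁻¹ * (G i j * (v i * v j)) + 2⁻¹ * (G j i * (v i * v j)) := by
    rw [Matrix.one_apply]
    ring
  simp only [hsplit, Finset.sum_add_distrib, ← Finset.mul_sum, htranspose]
  simp only [Matrix.add_apply, add_mul, Finset.sum_add_distrib]
  ring

theorem sum_mixedCoeff_mul (A : Matrix ι ι ℝ) (q : CoeffJet ι κ) (k : κ) (v : ι → κ → ℝ) :
    ∑ p : ι × κ, mixedCoeff A q k p * v p.1 p.2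
      = ∑ i, ∑ j, A i j * ∑ l, (q.1 k i l * v j l + q.1 k j l * v i l) := by
  have hterm (B : ι → ι → ℝ) : ∑ i, ∑ j, B i j * ∑ l, q.1 k j l * v i l
      = ∑ i, ∑ l, (∑ j, B i j * q.1 k j l) * v i l := by
    simp only [Finset.mul_sum, Finset.sum_mul, mul_assoc]
    exact Finset.sum_congr rfl fun i _ => Finset.sum_comm
  simp only [mixedCoeff, Fintype.sum_prod_type, add_mul, mul_add, Finset.sum_add_distrib]
  rw [Finset.sum_comm (f := fun i j => A i j * ∑ l, q.1 k i l * v j l),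
    hterm fun i j => A i j, hterm fun i j => A j i, add_comm]

theorem sum_gradientCoeff_mul [DecidableEq κ] (e : ι → κ) (A : Matrix ι ι ℝ) (q : CoeffJet ι κ)
    (k : κ) (u : κ → ℝ) :
    ∑ l, gradientCoeff e A q k l * u l
      = ∑ i, ∑ j, A i j * ∑ l, (∑ p, q.1 k i p * q.1 p j l + q.2.1 i k j l) * u l
        + ∑ i, q.2.2.1 i * ∑ l, q.1 k i l * u l + ∑ i, q.2.2.2 k i * u (e i) := by
  have hquad (F : ι → ι → κ → ℝ) : ∑ l, (∑ i, ∑ j, A i j * F i j l) * u l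
      = ∑ i, ∑ j, A i j * ∑ l, F i j l * u l := by
    simp only [Finset.mul_sum, Finset.sum_mul, mul_assoc]
    rw [Finset.sum_comm]
    exact Finset.sum_congr rfl fun i _ => Finset.sum_comm
  have hlin : ∑ l, (∑ i, q.2.2.1 i * q.1 k i l) * u l
      = ∑ i, q.2.2.1 i * ∑ l, q.1 k i l * u l := by
    simp only [Finset.mul_sum, Finset.sum_mul, mul_assoc]
    exact Finset.sum_comm
  have hfiber : ∑ l, (∑ i with e i = l, q.2.2.2 k i) * u l = ∑ i, q.2.2.2 k i * u (e i) := by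
    rw [← Finset.sum_fiberwise _ e]
    refine Finset.sum_congr rfl fun l _ => ?_
    rw [Finset.sum_mul]
    exact Finset.sum_congr rfl fun i hi => by rw [(Finset.mem_filter.1 hi).2]
  rw [← hquad, ← hlin, ← hfiber]
  simp only [gradientCoeff, add_mul, Finset.sum_add_distrib]

theorem sum_commutator_le_commutatorBound_mul [DecidableEq κ] {δ : ℝ} (hδ : 0 < δ) (e : ι → κ)
    (A : Matrix ι ι ℝ) (q : CoeffJet ι κ) (u : κ → ℝ) (v : ι × κ → ℝ) :
    2 * ∑ k, u k * (∑ p, mixedCoeff A q k p * v p + ∑ l, gradientCoeff e A q k l * u l)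
      ≤ commutatorBound δ e A q * ∑ k, u k ^ 2 + 2 * δ * ∑ p, v p ^ 2 := by
  have hmixed := two_mul_sum_mul_sum_mul_le (mixedCoeff A q) u v (mul_pos two_pos hδ)
  have hgradient := two_mul_sum_mul_sum_mul_le (gradientCoeff e A q) u u one_pos
  simp only [commutatorBound, mul_add, Finset.sum_add_distrib]
  linarith

theorem continuous_commutatorBound [DecidableEq κ] (δ : ℝ) (e : ι → κ) (A : Matrix ι ι ℝ) :
    Continuous (commutatorBound δ e A) := by
  unfold commutatorBound mixedCoeff gradientCoeff
  fun_prop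

end Coefficients

section Commutator

variable {N m n : ℕ} {Z : Fin n → EuclideanSpace ℝ (Fin N) → EuclideanSpace ℝ (Fin N)}
  {D : EuclideanSpace ℝ (Fin N) → EuclideanSpace ℝ (Fin N)} {e : Fin m → Fin n}
  {c : Fin n → Fin m → Fin n → EuclideanSpace ℝ (Fin N) → ℝ}
  {α : Fin m → EuclideanSpace ℝ (Fin N) → ℝ}
  {f : EuclideanSpace ℝ (Fin N) → ℝ} {x : EuclideanSpace ℝ (Fin N)}

/-- The `CoeffJet` at `x` of structure functions `c` and drift coefficients `α`, the horizontal
fields being `Z (e i)`. -/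
noncomputable def coeffJet (Z : Fin n → EuclideanSpace ℝ (Fin N) → EuclideanSpace ℝ (Fin N))
    (e : Fin m → Fin n) (c : Fin n → Fin m → Fin n → EuclideanSpace ℝ (Fin N) → ℝ)
    (α : Fin m → EuclideanSpace ℝ (Fin N) → ℝ) (x : EuclideanSpace ℝ (Fin N)) :
    CoeffJet (Fin m) (Fin n) :=
  (fun k j l => c k j l x, fun i k j l => vderiv (Z (e i)) (c k j l) x, fun i => α i x,
    fun k i => vderiv (Z k) (α i) x)

theorem continuous_coeffJet (hZ : ∀ k, Continuous (Z k)) (hc : ∀ k j l, ContDiff ℝ 1 (c k j l))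
    (hα : ∀ i, ContDiff ℝ 1 (α i)) : Continuous (coeffJet Z e c α) := by
  have hvderiv (k) {g} (hg : ContDiff ℝ 1 g) : Continuous (vderiv (Z k) g) :=
    (contDiff_vderiv (contDiff_zero.2 (hZ k)) hg (by norm_num)).continuous
  unfold coeffJet
  fun_prop

theorem isBounded_range_coeffJet (hc : ∀ k j l, ∃ C, ∀ x, |c k j l x| ≤ C)
    (hXc : ∀ k j l i, ∃ C, ∀ x, |vderiv (Z (e i)) (c k j l) x| ≤ C)
    (hα : ∀ i, ∃ C, ∀ x, |α i x| ≤ C) (hZα : ∀ k i, ∃ C, ∀ x, |vderiv (Z k) (α i) x| ≤ C) :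
    IsBounded (range (coeffJet Z e c α)) := by
  simp only [← isBounded_image_fst_and_snd, ← forall_isBounded_image_eval_iff, ← range_comp]
  simp only [isBounded_iff_forall_norm_le, forall_mem_range, Real.norm_eq_abs]
  exact ⟨hc, fun i k j l => hXc k j l i, hα, hZα⟩

theorem vderiv_lieVF_eq_sum {V W : EuclideanSpace ℝ (Fin N) → EuclideanSpace ℝ (Fin N)}
    {a : Fin n → ℝ} (h : lieVF V W x = ∑ l, a l • Z l x) :
    vderiv (lieVF V W) f x = ∑ l, a l * vderiv (Z l) f x := by
  simp only [vderiv, h, map_sum, map_smul, smul_eq_mul]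

section StructureFunctions

variable (hZ : ∀ k, ContDiff ℝ 2 (Z k))
  (hZX : ∀ k j p, lieVF (Z k) (Z (e j)) p = ∑ l, c k j l p • Z l p)
include hZ hZX

theorem vderiv_vderiv_eq_add_sum (hf : ContDiff ℝ 2 f) (k : Fin n) (j : Fin m) :
    vderiv (Z k) (vderiv (Z (e j)) f) = fun x =>
      vderiv (Z (e j)) (vderiv (Z k) f) x + ∑ l, c k j l x * vderiv (Z l) f x := by
  funext x
  have hZ' (k) : DifferentiableAt ℝ (Z k) x := (hZ k).differentiable two_ne_zero x
  rw [vderiv_vderiv_comm (hZ' k) (hZ' _) hf, vderiv_lieVF_eq_sum (hZX k j x)]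

theorem vderiv_vderiv_vderiv_eq_add_sum (hcd : ∀ k j l, DifferentiableAt ℝ (c k j l) x)
    (hf : ContDiff ℝ 3 f) (k : Fin n) (i j : Fin m) :
    vderiv (Z k) (vderiv (Z (e i)) (vderiv (Z (e j)) f)) x
      = vderiv (Z (e i)) (vderiv (Z (e j)) (vderiv (Z k) f)) x
        + ∑ l, (c k i l x * vderiv (Z (e j)) (vderiv (Z l) f) x
          + c k j l x * vderiv (Z (e i)) (vderiv (Z l) f) x)
        + ∑ l, (∑ p, c k i p x * c p j l x + vderiv (Z (e i)) (c k j l) x)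
          * vderiv (Z l) f x := by
  have hZf (l) : ContDiff ℝ 2 (vderiv (Z l) f) := contDiff_vderiv (hZ l) hf (by norm_num)
  have hZf' (l) : DifferentiableAt ℝ (vderiv (Z l) f) x := (hZf l).differentiable two_ne_zero x
  have hXZf : DifferentiableAt ℝ (vderiv (Z (e j)) (vderiv (Z k) f)) x :=
    (contDiff_vderiv ((hZ _).of_le one_le_two) (hZf k) (by norm_num)).differentiable one_ne_zero x
  have hcommute₂ := vderiv_vderiv_eq_add_sum hZ hZX (hf.of_le (by norm_num))
  have hleibniz : vderiv (Z (e i)) (fun x => ∑ l, c k j l x * vderiv (Z l) f x) x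
      = ∑ l, (vderiv (Z (e i)) (c k j l) x * vderiv (Z l) f x
        + c k j l x * vderiv (Z (e i)) (vderiv (Z l) f) x) := by
    rw [vderiv_fun_sum (by fun_prop)]
    exact Finset.sum_congr rfl fun l _ => vderiv_fun_mul (hcd k j l) (hZf' l)
  have hswap : ∑ l, c k i l x * ∑ p, c l j p x * vderiv (Z p) f x
      = ∑ l, (∑ p, c k i p x * c p j l x) * vderiv (Z l) f x := by
    simp only [Finset.mul_sum, Finset.sum_mul, mul_assoc]
    exact Finset.sum_comm
  rw [vderiv_vderiv_eq_add_sum hZ hZX (hZf _)]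
  simp only [hcommute₂]
  rw [vderiv_fun_add hXZf (by fun_prop), hleibniz]
  simp only [mul_add, add_mul, Finset.sum_add_distrib, hswap]
  ring

theorem vderiv_opL_sub_opL_vderiv {G : Matrix (Fin m) (Fin m) ℝ} {β : ℝ} {lam : Fin n → ℝ}
    (hD : DifferentiableAt ℝ D x) (hZD : ∀ k, lieVF (Z k) D x = lam k • Z k x)
    (hcd : ∀ k j l, DifferentiableAt ℝ (c k j l) x) (hα : ∀ i, DifferentiableAt ℝ (α i) x)
    (hf : ContDiff ℝ 3 f) (k : Fin n) :
    vderiv (Z k) (opL (fun i => Z (e i)) D G α β f) x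
        - opL (fun i => Z (e i)) D G α β (vderiv (Z k) f) x
      = ∑ p : Fin m × Fin n, mixedCoeff (1 + G) (coeffJet Z e c α x) k p
          * vderiv (Z (e p.1)) (vderiv (Z p.2) f) x
        + ∑ l, gradientCoeff e (1 + G) (coeffJet Z e c α x) k l * vderiv (Z l) f x
        - β * lam k * vderiv (Z k) f x := by
  have hf₂ : ContDiff ℝ 2 f := hf.of_le (by norm_num)
  have hdrift : vderiv (Z k) (vderiv D f) x
      = vderiv D (vderiv (Z k) f) x + lam k * vderiv (Z k) f x := by
    rw [vderiv_vderiv_comm ((hZ k).differentiable two_ne_zero x) hD hf₂]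
    simp only [vderiv, hZD, map_smul, smul_eq_mul]
  rw [vderiv_opL (fun i => hZ (e i)) hD hα hf, opL_eq_one_add, hdrift,
    sum_mixedCoeff_mul _ _ _ fun i l => vderiv (Z (e i)) (vderiv (Z l) f) x,
    sum_gradientCoeff_mul e _ _ _ fun l => vderiv (Z l) f x]
  simp only [vderiv_vderiv_vderiv_eq_add_sum hZ hZX hcd hf k,
    vderiv_vderiv_eq_add_sum hZ hZX hf₂ k, coeffJet, mul_add, Finset.sum_add_distrib]
  ring

theorem two_mul_cGamma2_opL_sub_opL_cGamma_le {G : Matrix (Fin m) (Fin m) ℝ} {β δ : ℝ}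
    {lam : Fin n → ℝ} (hD : DifferentiableAt ℝ D x)
    (hZD : ∀ k, lieVF (Z k) D x = lam k • Z k x)
    (hcd : ∀ k j l, DifferentiableAt ℝ (c k j l) x) (hδ : 0 < δ)
    (hG : ∀ v : Fin m → ℝ, δ * ∑ i, v i ^ 2 ≤ ∑ i, ∑ j, (1 + G) i j * (v i * v j))
    (hα : ∀ i, DifferentiableAt ℝ (α i) x) (hf : ContDiff ℝ 3 f) :
    2 * cGamma2 Z f (opL (fun i => Z (e i)) D G α β f) x
        - opL (fun i => Z (e i)) D G α β (cGamma Z f) x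
      ≤ commutatorBound δ e (1 + G) (coeffJet Z e c α x) * cGamma Z f x
        - 2 * ∑ k, β * lam k * vderiv (Z k) f x ^ 2 := by
  have helliptic : δ * ∑ p : Fin m × Fin n, vderiv (Z (e p.1)) (vderiv (Z p.2) f) x ^ 2
      ≤ ∑ k, ∑ i, ∑ j, (1 + G) i j * (vderiv (Z (e i)) (vderiv (Z k) f) x
        * vderiv (Z (e j)) (vderiv (Z k) f) x) := by
    rw [Fintype.sum_prod_type_right, Finset.mul_sum]
    exact Finset.sum_le_sum fun k _ => hG fun i => vderiv (Z (e i)) (vderiv (Z k) f) x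
  have habsorb := sum_commutator_le_commutatorBound_mul hδ e (1 + G) (coeffJet Z e c α x)
    (fun k => vderiv (Z k) f x) fun p => vderiv (Z (e p.1)) (vderiv (Z p.2) f) x
  have hdrift (k) : vderiv (Z k) f x * (β * lam k * vderiv (Z k) f x)
      = β * lam k * vderiv (Z k) f x ^ 2 := by ring
  rw [two_mul_cGamma2_opL_sub_opL_cGamma (fun i => (hZ (e i)).of_le one_le_two) hZ hf]
  simp only [vderiv_opL_sub_opL_vderiv hZ hZX hD hZD hcd hα hf, mul_sub, hdrift,
    Finset.sum_sub_distrib, mul_assoc (2 : ℝ) (vderiv _ _ _), ← Finset.mul_sum]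
  unfold cGamma
  linarith

end StructureFunctions

end Commutator

theorem exists_pos_forall_lt_of_finite {ι : Type*} [Finite ι] {a : ι → ℝ} (ha : ∀ i, 0 < a i) :
    ∃ μ > 0, ∀ i, μ < a i :=
  have hsmall : ∀ᶠ μ in 𝓝[>] (0 : ℝ), ∀ i, μ < a i :=
    eventually_all.2 fun i => nhdsWithin_le_nhds (eventually_lt_nhds (ha i))
  (eventually_mem_nhdsWithin.and hsmall).exists

theorem bddAbove_range_comp_of_isBounded {Y P : Type*} [PseudoMetricSpace P] [ProperSpace P]
    {Φ : P → ℝ} (hΦ : Continuous Φ) {F : Y → P} (hF : IsBounded (range F)) :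
    BddAbove (range (Φ ∘ F)) := by
  rw [range_comp]
  exact (hF.isCompact_closure.bddAbove_image hΦ.continuousOn).mono (image_mono subset_closure)

theorem complete_gradient_bound_pointwise_nonconstant_general
    {N m n : ℕ} {r : WithTop ℕ∞} (hr : 3 ≤ r) (e : Fin m → Fin n)
    (Z : Fin n → EuclideanSpace ℝ (Fin N) → EuclideanSpace ℝ (Fin N))
    (hZ : ∀ k, ContDiff ℝ 2 (Z k))
    (D : EuclideanSpace ℝ (Fin N) → EuclideanSpace ℝ (Fin N)) (hD : Differentiable ℝ D)
    (lam : Fin n → ℝ) (hZD : ∀ k p, lieVF (Z k) D p = lam k • Z k p)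
    (c : Fin n → Fin m → Fin n → EuclideanSpace ℝ (Fin N) → ℝ)
    (hc : ∀ k j l, ContDiff ℝ 1 (c k j l))
    (hZX : ∀ k j p, lieVF (Z k) (Z (e j)) p = ∑ l, c k j l p • Z l p)
    (G : Matrix (Fin m) (Fin m) ℝ) (δ : ℝ) (hδ : 0 < δ)
    (hG : ∀ v : Fin m → ℝ, δ * ∑ i, v i ^ 2
      ≤ ∑ i, ∑ j, ((G i j + G j i) / 2 + (if i = j then 1 else 0)) * v i * v j)
    (α : Fin m → EuclideanSpace ℝ (Fin N) → ℝ) (hα : ∀ i, ContDiff ℝ 1 (α i)) :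
    (∀ β : ℝ, ∃ κ : EuclideanSpace ℝ (Fin N) → ℝ, Continuous κ ∧
      ∀ f, ContDiff ℝ r f → ∀ x,
        2 * cGamma2 Z f (opL (fun i => Z (e i)) D G α β f) x
            - opL (fun i => Z (e i)) D G α β (cGamma Z f) x
          ≤ -κ x * cGamma Z f x) ∧
    ((∀ k, 0 < lam k) →
      (∀ k j l, ∃ C, ∀ x, |c k j l x| ≤ C) →
      (∀ k j l i, ∃ C, ∀ x, |vderiv (Z (e i)) (c k j l) x| ≤ C) →
      (∀ i, ∃ C, ∀ x, |α i x| ≤ C) →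
      (∀ k i, ∃ C, ∀ x, |vderiv (Z k) (α i) x| ≤ C) →
      ∃ b₀ > (0 : ℝ), ∀ β > b₀, ∃ κ : EuclideanSpace ℝ (Fin N) → ℝ, Continuous κ ∧
        (∃ ε > (0 : ℝ), ∀ x, ε ≤ κ x) ∧
        ∀ f, ContDiff ℝ r f → ∀ x,
          2 * cGamma2 Z f (opL (fun i => Z (e i)) D G α β f) x
              - opL (fun i => Z (e i)) D G α β (cGamma Z f) x
            ≤ -κ x * cGamma Z f x) := by
  set M := fun x => commutatorBound δ e (1 + G) (coeffJet Z e c α x)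
  have hM : Continuous M := (continuous_commutatorBound δ e (1 + G)).comp
    (continuous_coeffJet (fun k => (hZ k).continuous) hc hα)
  have hbound {β μ : ℝ} (hμ : ∀ k, μ ≤ β * lam k) (f) (hf : ContDiff ℝ r f) (x) :
      2 * cGamma2 Z f (opL (fun i => Z (e i)) D G α β f) x
          - opL (fun i => Z (e i)) D G α β (cGamma Z f) x
        ≤ -(2 * μ - M x) * cGamma Z f x := by
    have hdrift : μ * cGamma Z f x ≤ ∑ k, β * lam k * vderiv (Z k) f x ^ 2 := by
      rw [cGamma, Finset.mul_sum]
      gcongr with k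
      exact hμ k
    have hpointwise := two_mul_cGamma2_opL_sub_opL_cGamma_le (β := β) hZ hZX (hD x)
      (fun k => hZD k x) (fun k j l => (hc k j l).differentiable one_ne_zero x) hδ
      (fun v => (hG v).trans_eq (sum_symmetrization_add_one_mul G v))
      (fun i => (hα i).differentiable one_ne_zero x) (hf.of_le hr)
    linarith
  refine ⟨fun β => ?_, fun hlam hcb hXcb hαb hZαb => ?_⟩
  · obtain ⟨μ, hμ⟩ := (finite_range fun k => β * lam k).bddBelow
    exact ⟨fun x => 2 * μ - M x, by fun_prop, hbound fun k => hμ (mem_range_self k)⟩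
  · obtain ⟨μ, hμ, hμlam⟩ := exists_pos_forall_lt_of_finite hlam
    obtain ⟨C, hC⟩ : BddAbove (range M) := bddAbove_range_comp_of_isBounded
      (continuous_commutatorBound δ e (1 + G)) (isBounded_range_coeffJet hcb hXcb hαb hZαb)
    have hb₀ : 0 < (|C| + 1) / (2 * μ) := by positivity
    refine ⟨(|C| + 1) / (2 * μ), hb₀, fun β hβ => ⟨fun x => 2 * (β * μ) - M x, by fun_prop,
      ⟨1, one_pos, fun x => ?_⟩,
      hbound fun k => mul_le_mul_of_nonneg_left (hμlam k).le (hb₀.trans hβ).le⟩⟩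
    have hβμ : |C| + 1 < β * (2 * μ) := (div_lt_iff₀ (by positivity)).1 hβ
    have hMC : M x ≤ |C| := (hC (mem_range_self x)).trans (le_abs_self C)
    linarith

/-- Pointwise Bakry–Émery-type inequality for the complete gradient when the
commutator coefficients `c_{kjl}` are smooth functions rather than constants. -/
theorem complete_gradient_bound_pointwise_nonconstant
    (N m n : ℕ) (hm : 1 ≤ m) (hmn : m ≤ n)
    (Z : Fin n → (EuclideanSpace ℝ (Fin N) → EuclideanSpace ℝ (Fin N)))
    (hZ : ∀ k, ContDiff ℝ (⊤ : ℕ∞) (Z k))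
    (D : EuclideanSpace ℝ (Fin N) → EuclideanSpace ℝ (Fin N))
    (hD : ContDiff ℝ (⊤ : ℕ∞) D)
    (lam : Fin n → ℝ) (hlam : ∀ k, 0 < lam k)
    (hZD : ∀ k p, lieVF (Z k) D p = lam k • Z k p)
    (c : Fin n → Fin m → Fin n → (EuclideanSpace ℝ (Fin N) → ℝ))
    (hcsmooth : ∀ k j l, ContDiff ℝ (⊤ : ℕ∞) (c k j l))
    (hc : ∀ k j p, lieVF (Z k) (Z (Fin.castLE hmn j)) p = ∑ l, c k j l p • Z l p)
    (G : Matrix (Fin m) (Fin m) ℝ) (δ : ℝ) (hδ : 0 < δ)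
    (hG : ∀ v : Fin m → ℝ,
      δ * ∑ i, (v i) ^ 2
        ≤ ∑ i, ∑ j, ((G i j + G j i) / 2 + (if i = j then 1 else 0)) * v i * v j)
    (α : Fin m → EuclideanSpace ℝ (Fin N) → ℝ)
    (hα : ∀ i, ContDiff ℝ (⊤ : ℕ∞) (α i))
    (hαbd : ∀ i, ∃ C, ∀ x, |α i x| ≤ C)
    (hZαbd : ∀ k i, ∃ C, ∀ x, |vderiv (Z k) (α i) x| ≤ C) :
    (∀ β > (0 : ℝ), ∃ κ : EuclideanSpace ℝ (Fin N) → ℝ, Continuous κ ∧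
      ∀ f : EuclideanSpace ℝ (Fin N) → ℝ, ContDiff ℝ (⊤ : ℕ∞) f → ∀ x,
        2 * cGamma2 Z f (opL (fun i => Z (Fin.castLE hmn i)) D G α β f) x
            - opL (fun i => Z (Fin.castLE hmn i)) D G α β (cGamma Z f) x
          ≤ -κ x * cGamma Z f x) ∧
    (((∀ k j l, ∃ C, ∀ x, |c k j l x| ≤ C) ∧
      (∀ k j l j', ∃ C, ∀ x, |vderiv (Z (Fin.castLE hmn j')) (c k j l) x| ≤ C)) →
      ∃ b₀ > (0 : ℝ), ∀ β > b₀, ∃ κ : EuclideanSpace ℝ (Fin N) → ℝ, Continuous κ ∧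
        (∃ ε > (0 : ℝ), ∀ x, ε ≤ κ x) ∧
        ∀ f : EuclideanSpace ℝ (Fin N) → ℝ, ContDiff ℝ (⊤ : ℕ∞) f → ∀ x,
          2 * cGamma2 Z f (opL (fun i => Z (Fin.castLE hmn i)) D G α β f) x
              - opL (fun i => Z (Fin.castLE hmn i)) D G α β (cGamma Z f) x
            ≤ -κ x * cGamma Z f x) := by
  have ⟨hpointwise, huniform⟩ := complete_gradient_bound_pointwise_nonconstant_general
    (r := (⊤ : ℕ∞)) ENat.LEInfty.out (Fin.castLE hmn) Z (fun k => (hZ k).of_le ENat.LEInfty.out) D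
    (hD.differentiable (by simp)) lam hZD c (fun k j l => (hcsmooth k j l).of_le ENat.LEInfty.out)
    hc G δ hδ hG α fun i => (hα i).of_le ENat.LEInfty.out
  exact ⟨fun β _ => hpointwise β, fun hbdd => huniform hlam hbdd.1 hbdd.2 hαbd hZαbd⟩
end

section
/- Let d ≥ 1 and R ≥ 1 be natural numbers, let M, S ≥ 0 be reals, and let Λ ⊆ ℤᵈ be nonempty. For each k ∈ ℤᵈ let u_k : [0,∞) → ℝ be continuous with 0 ≤ u_k(t) ≤ S for all t ≥ 0, and suppose that for every k ∉ Λ and every t ≥ 0, u_k(t) ≤ M · ∑_{j ∈ ℤᵈ, |j−k|₁ ≤ R} ∫₀ᵗ u_j(s) ds. Then for every k ∈ ℤᵈ, every N ∈ ℕ with N·R ≤ dist₁(k, Λ), and every t ≥ 0, u_k(t) ≤ (M(2R+1)ᵈ)ᴺ · tᴺ / N! · S. -/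
open scoped BigOperators

/-- The ℓ¹-ball of radius `R` around `k` in `ℤᵈ`, as a `Finset`. -/
noncomputable def ball1 (d R : ℕ) (k : Fin d → ℤ) : Finset (Fin d → ℤ) :=
  (Fintype.piFinset fun i => Finset.Icc (k i - R) (k i + R)).filter
    fun j => (∑ i, |j i - k i|) ≤ (R : ℤ)

/-!
Picard iteration: as long as `k` lies outside `Λ`, the recursive inequality bounds `u k` by the
time integrals of its neighbours, and each round of substitution moves at most `R` closer to `Λ`.
Hence `N` rounds are available when `N * R ≤ dist₁(k, Λ)`. Each of them multiplies the initial
bound `S` by `M` times the size of a neighbourhood and integrates once more in time; integrating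
the constant `1` in this way `N` times produces `t ^ N / N!`.
-/

open scoped Nat

theorem integral_pow_div_factorial (n : ℕ) (t : ℝ) :
    ∫ s in (0 : ℝ)..t, s ^ n / n ! = t ^ (n + 1) / (n + 1)! := by
  rw [intervalIntegral.integral_div, integral_pow, zero_pow n.succ_ne_zero, sub_zero, div_div,
    Nat.factorial_succ]
  push_cast
  rfl

theorem integral_le_mul_pow_div_factorial {f : ℝ → ℝ} {c t : ℝ} {n : ℕ} (ht : 0 ≤ t)
    (hf : IntervalIntegrable f MeasureTheory.volume 0 t)
    (hfc : ∀ s ∈ Set.Icc 0 t, f s ≤ c * (s ^ n / n !)) :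
    ∫ s in (0 : ℝ)..t, f s ≤ c * (t ^ (n + 1) / (n + 1)!) :=
  calc ∫ s in (0 : ℝ)..t, f s
      ≤ ∫ s in (0 : ℝ)..t, c * (s ^ n / n !) :=
        intervalIntegral.integral_mono_on ht hf
          (Continuous.intervalIntegrable (by fun_prop) _ _) hfc
    _ = c * (t ^ (n + 1) / (n + 1)!) := by
        rw [intervalIntegral.integral_const_mul, integral_pow_div_factorial]

/-- `AvoidsFor B Λ N k` says that no walk which starts at `k` and moves from each vertex `i` to an
element of `B i` reaches `Λ` in fewer than `N` steps. It replaces "`k` is at distance at least `N`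
from `Λ`" on an index set that carries no metric. -/
def AvoidsFor {ι : Type*} (B : ι → Finset ι) (Λ : Set ι) : ℕ → ι → Prop
  | 0, _ => True
  | N + 1, k => k ∉ Λ ∧ ∀ j ∈ B k, AvoidsFor B Λ N j

theorem finite_speed_iteration_general {ι : Type*} {B : ι → Finset ι} {Λ : Set ι}
    {u : ι → ℝ → ℝ} {M S D : ℝ} (hM : 0 ≤ M) (hS : 0 ≤ S)
    (hB : ∀ k, ((B k).card : ℝ) ≤ D)
    (hloc : ∀ k, MeasureTheory.LocallyIntegrableOn (u k) (Set.Ici 0))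
    (hbd : ∀ k, ∀ t ≥ 0, u k t ≤ S)
    (hrec : ∀ k ∉ Λ, ∀ t ≥ 0, u k t ≤ M * ∑ j ∈ B k, ∫ s in (0 : ℝ)..t, u j s)
    {k : ι} {N : ℕ} (hk : AvoidsFor B Λ N k) {t : ℝ} (ht : 0 ≤ t) :
    u k t ≤ (M * D) ^ N * t ^ N / N ! * S := by
  induction N generalizing k t with
  | zero => simpa using hbd k t ht
  | succ N ih =>
    obtain ⟨hkΛ, hkB⟩ := hk
    have hD : 0 ≤ D := (Nat.cast_nonneg _).trans (hB k)
    have hintegrable (j : ι) : IntervalIntegrable (u j) MeasureTheory.volume 0 t :=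
      (intervalIntegrable_iff_integrableOn_Icc_of_le ht).mpr
        ((hloc j).integrableOn_compact_subset Set.Icc_subset_Ici_self isCompact_Icc)
    have hneighbour : ∀ j ∈ B k,
        ∫ s in (0 : ℝ)..t, u j s ≤ (M * D) ^ N * S * (t ^ (N + 1) / (N + 1)!) := fun j hj =>
      integral_le_mul_pow_div_factorial ht (hintegrable j) fun s hs =>
        (ih (hkB j hj) hs.1).trans_eq (by ring)
    calc u k t
        ≤ M * ∑ j ∈ B k, ∫ s in (0 : ℝ)..t, u j s := hrec k hkΛ t ht
      _ ≤ M * ∑ _j ∈ B k, (M * D) ^ N * S * (t ^ (N + 1) / (N + 1)!) := by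
          gcongr with j hj
          exact hneighbour j hj
      _ = M * (B k).card * ((M * D) ^ N * S * (t ^ (N + 1) / (N + 1)!)) := by
          rw [Finset.sum_const, nsmul_eq_mul, ← mul_assoc M]
      _ ≤ M * D * ((M * D) ^ N * S * (t ^ (N + 1) / (N + 1)!)) := by
          gcongr
          exact hB k
      _ = (M * D) ^ (N + 1) * t ^ (N + 1) / (N + 1)! * S := by ring

theorem sum_abs_sub_le_add {ι α : Type*} [AddCommGroup α] [LinearOrder α] [IsOrderedAddMonoid α]
    (s : Finset ι) (x y z : ι → α) :
    ∑ i ∈ s, |x i - z i| ≤ ∑ i ∈ s, |x i - y i| + ∑ i ∈ s, |y i - z i| := by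
  rw [← Finset.sum_add_distrib]
  exact Finset.sum_le_sum fun i _ => abs_sub_le (x i) (y i) (z i)

section ball1

variable {d R : ℕ} {j k : Fin d → ℤ}

theorem sum_abs_sub_le_of_mem_ball1 (hj : j ∈ ball1 d R k) : ∑ i, |k i - j i| ≤ R := by
  simpa only [abs_sub_comm] using (Finset.mem_filter.mp hj).2

theorem card_ball1_le (d R : ℕ) (k : Fin d → ℤ) : (ball1 d R k).card ≤ (2 * R + 1) ^ d := by
  have hside : ∀ i, (Finset.Icc (k i - R) (k i + R)).card = 2 * R + 1 := fun i => by
    rw [Int.card_Icc]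
    omega
  calc (ball1 d R k).card
      ≤ (Fintype.piFinset fun i => Finset.Icc (k i - R) (k i + R)).card :=
        Finset.card_filter_le _ _
    _ = (2 * R + 1) ^ d := by
        simp only [Fintype.card_piFinset, hside, Finset.prod_const, Finset.card_univ,
          Fintype.card_fin]

theorem avoidsFor_ball1_of_le_sum_abs_sub (hR : 1 ≤ R) {Λ : Set (Fin d → ℤ)} {N : ℕ}
    (hk : ∀ l ∈ Λ, ((N * R : ℕ) : ℤ) ≤ ∑ i, |k i - l i|) : AvoidsFor (ball1 d R) Λ N k := by
  induction N generalizing k with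
  | zero => trivial
  | succ N ih =>
    refine ⟨fun hkΛ => ?_, fun j hj => ih fun l hl => ?_⟩
    · have hdist_self : (((N + 1) * R : ℕ) : ℤ) ≤ 0 := by simpa using hk k hkΛ
      have hpos : 0 < (N + 1) * R := by positivity
      omega
    · have hkl := hk l hl
      have htriangle := sum_abs_sub_le_add Finset.univ k j l
      have hkj := sum_abs_sub_le_of_mem_ball1 hj
      push_cast at hkl ⊢
      linarith

end ball1

/-- Iteration lemma at the core of the finite speed of propagation estimate. -/
theorem finite_speed_iteration
    (d R : ℕ) (hd : 1 ≤ d) (hR : 1 ≤ R)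
    (M S : ℝ) (hM : 0 ≤ M) (hS : 0 ≤ S)
    (Λ : Set (Fin d → ℤ)) (hΛ : Λ.Nonempty)
    (u : (Fin d → ℤ) → ℝ → ℝ)
    (hcont : ∀ k, ContinuousOn (u k) (Set.Ici (0 : ℝ)))
    (hbd : ∀ k, ∀ t ≥ (0 : ℝ), 0 ≤ u k t ∧ u k t ≤ S)
    (hrec : ∀ k ∉ Λ, ∀ t ≥ (0 : ℝ),
      u k t ≤ M * ∑ j ∈ ball1 d R k, ∫ s in (0 : ℝ)..t, u j s) :
    ∀ (k : Fin d → ℤ) (N : ℕ),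
      (∀ l ∈ Λ, ((N * R : ℕ) : ℤ) ≤ ∑ i, |k i - l i|) →
      ∀ t ≥ (0 : ℝ),
        u k t ≤ (M * (2 * R + 1) ^ d) ^ N * t ^ N / (N.factorial : ℝ) * S := by
  intro k N hk t ht
  exact finite_speed_iteration_general hM hS (fun j => mod_cast card_ball1_le d R j)
    (fun j => (hcont j).locallyIntegrableOn measurableSet_Ici) (fun j t ht => (hbd j t ht).2) hrec
    (avoidsFor_ball1_of_le_sum_abs_sub hR hk) ht
end
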